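/- Let t* > 0, R > 0, T > 0 with √12 (T+t*)^{1/3} < R, let x₀ satisfy x₀² < 12 t*^{2/3}, let B be the Barenblatt function B(x,t) = 2(t+t*)^{-1/3} · max(0, 1 − (x²/12)(t+t*)^{-2/3}), let η(t) = x₀((t+t*)/t*)^{1/3}, and let G(x,t) = −x/(3(t+t*)) if x² < 12(t+t*)^{2/3} and G(x,t) = 0 otherwise. For ε > 0 let H_ε : ℝ → ℝ be the piecewise linear regularized Heaviside function with H_ε(s) = 0 for s ≤ −ε, H_ε(s) = (s+ε)/(2ε) for −ε ≤ s ≤ ε, and H_ε(s) = 1 for s ≥ ε, and set u₁^ε(x,t) = H_ε(x − η(t)) B(x,t). Then for every continuously differentiable function φ : [−R,R] × [0,T] → ℝ there exists a constant C > 0, independent of ε, such that for all sufficiently small ε > 0, | ∫_{−R}^{R} u₁^ε(x,T) φ(x,T) dx − ∫_{−R}^{R} u₁^ε(x,0) φ(x,0) dx − ∫₀^T ∫_{−R}^{R} u₁^ε(x,t) ( ∂_t φ(x,t) − G(x,t) ∂_x φ(x,t) ) dx dt | ≤ C ε. -/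

import Mathlib

open Set intervalIntegral

/-- The Barenblatt solution of the porous medium equation. -/
noncomputable def barenblatt (ts x t : ℝ) : ℝ :=
  2 * (t + ts) ^ (-(1:ℝ)/3) * max 0 (1 - x ^ 2 / 12 * (t + ts) ^ (-(2:ℝ)/3))

/-- The piecewise linear regularized Heaviside function: `0` for `s ≤ -ε`,
`(s+ε)/(2ε)` for `-ε ≤ s ≤ ε`, and `1` for `s ≥ ε`. -/
noncomputable def heavisideReg (ε s : ℝ) : ℝ :=
  max 0 (min 1 ((s + ε) / (2 * ε)))

/-- The velocity field `G(x,t) = -x/(3(t+t*))` inside the support of the Barenblatt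
solution and `0` outside; it is an a.e. version of `∂_x B`. -/
noncomputable def Gvel (ts x t : ℝ) : ℝ :=
  if x ^ 2 < 12 * (t + ts) ^ ((2:ℝ)/3) then -x / (3 * (t + ts)) else 0

/-!
In the similarity variable `y = x / (t + t*)^{1/3}` the Barenblatt solution is a fixed profile and
`η` is the constant point `y₀ = x₀ / t*^{1/3}`. Hence the sharply cut density `1_{x > η(t)} B(x, t)`
is a cut-off profile carried along the trajectories `x = (t + t*)^{1/3} y`, whose velocity
`x / (3 (t + t*))` is `-G` on the support of `B`; integrating the derivative of `t ↦ φ(x(t), t)`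
over trajectories shows that it satisfies the weak identity exactly. Replacing the sharp cut-off by
`H_ε` changes the integrands only where `|x - η(t)| ≤ ε`, so each spatial integral moves by `O(ε)`.
-/

open MeasureTheory Function Topology

section Integrals

variable {a b t₀ t₁ : ℝ}

theorem abs_integral_le_of_eq_zero_of_lt_abs_sub {f : ℝ → ℝ} {z ε M : ℝ} (hab : a ≤ b)
    (hε : 0 ≤ ε) (hM : ∀ x ∈ Icc a b, |f x| ≤ M) (hf : ∀ x, ε < |x - z| → f x = 0) :
    |∫ x in a..b, f x| ≤ 2 * M * ε := by
  have hM₀ : 0 ≤ M := (abs_nonneg _).trans (hM a (left_mem_Icc.2 hab))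
  have hlocal : ∫ x in a..b, f x = ∫ x in Ioc a b ∩ Icc (z - ε) (z + ε), f x := by
    rw [integral_of_le hab]
    refine setIntegral_eq_of_subset_of_forall_sdiff_eq_zero measurableSet_Ioc inter_subset_left ?_
    rintro x ⟨hx, hxz⟩
    refine hf x (lt_of_not_ge fun h => hxz ⟨hx, mem_Icc_iff_abs_le.1 ?_⟩)
    rwa [abs_sub_comm]
  have hmeas : volume.real (Ioc a b ∩ Icc (z - ε) (z + ε)) ≤ 2 * ε := by
    refine (measureReal_mono inter_subset_right measure_Icc_lt_top.ne).trans_eq ?_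
    rw [Real.volume_real_Icc_of_le (by linarith)]
    ring
  calc |∫ x in a..b, f x|
      ≤ M * volume.real (Ioc a b ∩ Icc (z - ε) (z + ε)) := by
        rw [hlocal, ← Real.norm_eq_abs]
        exact norm_setIntegral_le_of_norm_le_const
          ((measure_mono inter_subset_left).trans_lt measure_Ioc_lt_top)
          fun x hx => (Real.norm_eq_abs _).trans_le (hM x (Ioc_subset_Icc_self hx.1))
    _ ≤ M * (2 * ε) := by gcongr
    _ = 2 * M * ε := by ring

theorem intervalIntegral_intervalIntegral_sub (hab : a ≤ b) (ht : t₀ ≤ t₁) {f g : ℝ → ℝ → ℝ}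
    (hf : IntegrableOn (uncurry f) (Ioc a b ×ˢ Ioc t₀ t₁))
    (hg : IntegrableOn (uncurry g) (Ioc a b ×ˢ Ioc t₀ t₁)) :
    ∫ t in t₀..t₁, ∫ x in a..b, (f x t - g x t) =
      (∫ t in t₀..t₁, ∫ x in a..b, f x t) - ∫ t in t₀..t₁, ∫ x in a..b, g x t := by
  rw [IntegrableOn, Measure.volume_eq_prod, ← Measure.prod_restrict] at hf hg
  simp only [integral_of_le hab, integral_of_le ht]
  exact integral_integral_sub hf.swap hg.swap

/-- Fubini and the fundamental theorem of calculus on each line `{y} × [t₀, t₁]`. -/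
theorem integral_mul_sub_integral_mul_eq_integral_integral_mul_deriv (hab : a ≤ b) (ht : t₀ ≤ t₁)
    {w : ℝ → ℝ} (hw : IntervalIntegrable w volume a b) {Φ Φ' : ℝ → ℝ → ℝ}
    (hΦ : ContinuousOn (uncurry Φ) (Icc a b ×ˢ Icc t₀ t₁))
    (hΦ' : ContinuousOn (uncurry Φ') (Icc a b ×ˢ Icc t₀ t₁))
    (hderiv : ∀ y ∈ Ioo a b, ∀ t ∈ Ioo t₀ t₁, HasDerivAt (Φ y) (Φ' y t) t) :
    (∫ y in a..b, w y * Φ y t₁) - (∫ y in a..b, w y * Φ y t₀) =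
      ∫ t in t₀..t₁, ∫ y in a..b, w y * Φ' y t := by
  have hslice : ∀ t ∈ Icc t₀ t₁, IntervalIntegrable (fun y => w y * Φ y t) volume a b :=
    fun t htt => hw.mul_continuousOn (by simpa only [uIcc_of_le hab] using hΦ.uncurry_right t htt)
  have hprod : IntegrableOn (uncurry fun y t => w y * Φ' y t) (uIoc a b ×ˢ uIoc t₀ t₁) := by
    obtain ⟨M, hM⟩ := (isCompact_Icc.prod isCompact_Icc).exists_bound_of_continuousOn hΦ'
    have hsub : uIoc a b ×ˢ uIoc t₀ t₁ ⊆ Icc a b ×ˢ Icc t₀ t₁ := by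
      rw [uIoc_of_le hab, uIoc_of_le ht]
      exact prod_mono Ioc_subset_Icc_self Ioc_subset_Icc_self
    have hmeas : MeasurableSet (uIoc a b ×ˢ uIoc t₀ t₁) :=
      measurableSet_uIoc.prod measurableSet_uIoc
    refine Integrable.mul_bdd (c := M) ?_ ((hΦ'.mono hsub).aestronglyMeasurable hmeas)
      (ae_restrict_of_forall_mem hmeas fun p hp => hM p (hsub hp))
    rw [Measure.volume_eq_prod, ← Measure.prod_restrict, uIoc_of_le ht]
    exact (intervalIntegrable_iff.1 hw).comp_fst _
  rw [← intervalIntegral_intervalIntegral_swap hprod,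
    ← integral_sub (hslice t₁ (right_mem_Icc.2 ht)) (hslice t₀ (left_mem_Icc.2 ht))]
  refine integral_congr_Ioo_of_le hab fun y hy => ?_
  have hy' : y ∈ Icc a b := Ioo_subset_Icc_self hy
  have hftc : ∫ t in t₀..t₁, Φ' y t = Φ y t₁ - Φ y t₀ :=
    integral_eq_sub_of_hasDerivAt_of_le ht (hΦ.uncurry_left y hy') (hderiv y hy)
      ((hΦ'.uncurry_left y hy').intervalIntegrable_of_Icc ht)
  simp only [intervalIntegral.integral_const_mul, hftc, mul_sub]

end Integrals

theorem hasDerivAt_comp_of_continuousOn_partials {𝕜 E : Type*} [RCLike 𝕜] [NormedAddCommGroup E]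
    [NormedSpace 𝕜 E] {φ φx φt : 𝕜 → 𝕜 → E} {X : 𝕜 → 𝕜} {X' t : 𝕜} {U : Set (𝕜 × 𝕜)}
    (hU : U ∈ 𝓝 (X t, t)) (hφx : ∀ p ∈ U, HasDerivAt (fun x => φ x p.2) (φx p.1 p.2) p.1)
    (hφt : ∀ p ∈ U, HasDerivAt (φ p.1) (φt p.1 p.2) p.2) (hφxc : ContinuousOn (uncurry φx) U)
    (hφtc : ContinuousOn (uncurry φt) U) (hX : HasDerivAt X X' t) :
    HasDerivAt (fun τ => φ (X τ) τ) (φt (X t) t + X' • φx (X t) t) t := by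
  have hspan : Continuous (ContinuousLinearMap.toSpanSingleton 𝕜 : E → 𝕜 →L[𝕜] E) :=
    (ContinuousLinearMap.toSpanSingletonCLE (𝕜 := 𝕜) (E := E)).continuous
  have hφ := hasStrictFDerivAt_uncurry_coprod (𝕜 := 𝕜) (u := (X t, t)) (f := φ)
    (f₁ := fun x τ => .toSpanSingleton 𝕜 (φx x τ)) (f₂ := fun x τ => .toSpanSingleton 𝕜 (φt x τ))
    (Filter.eventually_of_mem hU fun p hp => (hφx p hp).hasFDerivAt)
    (Filter.eventually_of_mem hU fun p hp => (hφt p hp).hasFDerivAt)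
    (hspan.continuousAt.comp (hφxc.continuousAt hU))
    (hspan.continuousAt.comp (hφtc.continuousAt hU))
  refine (hφ.hasFDerivAt.comp_hasDerivAt (f := fun τ => (X τ, τ)) t
    (hX.prodMk (hasDerivAt_id t))).congr_deriv ?_
  simp [HasUncurry.uncurry, add_comm]

/-- `u` is a weak solution of the continuity equation `∂ₜu + ∂ₓ(v u) = 0` on `[a, b] × [t₀, t₁]`
when this defect vanishes for all test functions `φ`; the argument `ψ` stands for the derivative
`∂ₜφ + v ∂ₓφ` of `φ` along the velocity field `v`. -/
noncomputable def weakDefect (a b t₀ t₁ : ℝ) (φ ψ u : ℝ → ℝ → ℝ) : ℝ :=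
  (∫ x in a..b, u x t₁ * φ x t₁) - (∫ x in a..b, u x t₀ * φ x t₀)
    - ∫ t in t₀..t₁, ∫ x in a..b, u x t * ψ x t

section WeakDefect

variable {a b t₀ t₁ : ℝ} {φ ψ u u' : ℝ → ℝ → ℝ}

theorem weakDefect_congr {ψ' : ℝ → ℝ → ℝ} (hab : a ≤ b) (ht : t₀ ≤ t₁)
    (hu : ∀ x ∈ Icc a b, ∀ t ∈ Icc t₀ t₁, u x t = u' x t)
    (hψ : ∀ x ∈ Icc a b, ∀ t ∈ Icc t₀ t₁, u x t * ψ x t = u' x t * ψ' x t) :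
    weakDefect a b t₀ t₁ φ ψ u = weakDefect a b t₀ t₁ φ ψ' u' := by
  have hφ : ∀ t ∈ Icc t₀ t₁, ∫ x in a..b, u x t * φ x t = ∫ x in a..b, u' x t * φ x t :=
    fun t htt => integral_congr fun x hx => by
      rw [uIcc_of_le hab] at hx
      simp only [hu x hx t htt]
  have hψ' : ∫ t in t₀..t₁, ∫ x in a..b, u x t * ψ x t =
      ∫ t in t₀..t₁, ∫ x in a..b, u' x t * ψ' x t :=
    integral_congr fun t htt => integral_congr fun x hx => by
      rw [uIcc_of_le ht] at htt
      rw [uIcc_of_le hab] at hx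
      exact hψ x hx t htt
  simp only [weakDefect, hφ t₀ (left_mem_Icc.2 ht), hφ t₁ (right_mem_Icc.2 ht), hψ']

theorem weakDefect_sub (hab : a ≤ b) (ht : t₀ ≤ t₁)
    (hφ : ∀ t ∈ Icc t₀ t₁, IntervalIntegrable (fun x => u x t * φ x t) volume a b)
    (hφ' : ∀ t ∈ Icc t₀ t₁, IntervalIntegrable (fun x => u' x t * φ x t) volume a b)
    (hψ : IntegrableOn (uncurry fun x t => u x t * ψ x t) (Ioc a b ×ˢ Ioc t₀ t₁))
    (hψ' : IntegrableOn (uncurry fun x t => u' x t * ψ x t) (Ioc a b ×ˢ Ioc t₀ t₁)) :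
    weakDefect a b t₀ t₁ φ ψ (fun x t => u x t - u' x t) =
      weakDefect a b t₀ t₁ φ ψ u - weakDefect a b t₀ t₁ φ ψ u' := by
  have h₀ := left_mem_Icc.2 ht
  have h₁ := right_mem_Icc.2 ht
  simp only [weakDefect, sub_mul]
  rw [integral_sub (hφ t₁ h₁) (hφ' t₁ h₁), integral_sub (hφ t₀ h₀) (hφ' t₀ h₀),
    intervalIntegral_intervalIntegral_sub hab ht hψ hψ']
  ring

theorem abs_weakDefect_le_of_eq_zero_of_lt_abs_sub {η : ℝ → ℝ} {ε M N : ℝ} (hab : a ≤ b)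
    (ht : t₀ ≤ t₁) (hε : 0 ≤ ε) (hM : ∀ x ∈ Icc a b, ∀ t ∈ Icc t₀ t₁, |u x t * φ x t| ≤ M)
    (hN : ∀ x ∈ Icc a b, ∀ t ∈ Icc t₀ t₁, |u x t * ψ x t| ≤ N)
    (hu : ∀ x t, ε < |x - η t| → u x t = 0) :
    |weakDefect a b t₀ t₁ φ ψ u| ≤ (4 * M + 2 * N * (t₁ - t₀)) * ε := by
  have hφ : ∀ t ∈ Icc t₀ t₁, |∫ x in a..b, u x t * φ x t| ≤ 2 * M * ε := fun t htt =>
    abs_integral_le_of_eq_zero_of_lt_abs_sub hab hε (fun x hx => hM x hx t htt)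
      fun x hx => by rw [hu x t hx, zero_mul]
  have hψ : |∫ t in t₀..t₁, ∫ x in a..b, u x t * ψ x t| ≤ 2 * N * ε * |t₁ - t₀| := by
    rw [← Real.norm_eq_abs]
    refine intervalIntegral.norm_integral_le_of_norm_le_const fun t htt => ?_
    rw [uIoc_of_le ht] at htt
    exact abs_integral_le_of_eq_zero_of_lt_abs_sub hab hε
      (fun x hx => hN x hx t (Ioc_subset_Icc_self htt)) fun x hx => by rw [hu x t hx, zero_mul]
  rw [abs_of_nonneg (sub_nonneg.2 ht)] at hψ
  calc |weakDefect a b t₀ t₁ φ ψ u|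
      ≤ |∫ x in a..b, u x t₁ * φ x t₁| + |∫ x in a..b, u x t₀ * φ x t₀|
          + |∫ t in t₀..t₁, ∫ x in a..b, u x t * ψ x t| :=
        (abs_sub _ _).trans (add_le_add_left (abs_sub _ _) _)
    _ ≤ 2 * M * ε + 2 * M * ε + 2 * N * ε * (t₁ - t₀) :=
        add_le_add (add_le_add (hφ t₁ (right_mem_Icc.2 ht)) (hφ t₀ (left_mem_Icc.2 ht))) hψ
    _ = (4 * M + 2 * N * (t₁ - t₀)) * ε := by ring

end WeakDefect

/-- The dilation by `s > 0` of the density `P` that preserves its mass. -/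
noncomputable def massDilation (s : ℝ) (P : ℝ → ℝ) (x : ℝ) : ℝ :=
  s⁻¹ * P (x / s)

section MassDilation

variable {c R : ℝ} {P : ℝ → ℝ}

theorem integral_massDilation_mul {s : ℝ} (hs : 0 < s) (hR : c * s ≤ R)
    (hP : support P ⊆ Ioo (-c) c) (g : ℝ → ℝ) :
    ∫ x in (-R)..R, massDilation s P x * g x = ∫ y in (-c)..c, P y * g (s * y) := by
  have hsupp : support (fun x => massDilation s P x * g x) ⊆ Ioc (s * -c) (s * c) := by
    intro x hx
    obtain ⟨hl, hr⟩ : x / s ∈ Ioo (-c) c :=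
      hP (right_ne_zero_of_mul (left_ne_zero_of_mul hx))
    rw [lt_div_iff₀' hs] at hl
    rw [div_lt_iff₀' hs] at hr
    exact ⟨hl, hr.le⟩
  calc ∫ x in (-R)..R, massDilation s P x * g x
      = ∫ x in (s * -c)..(s * c), massDilation s P x * g x := by
        rw [integral_eq_integral_of_support_subset hsupp, integral_eq_integral_of_support_subset
          (hsupp.trans (Ioc_subset_Ioc (by linarith) (by linarith)))]
    _ = ∫ y in (-c)..c, s * (massDilation s P (s * y) * g (s * y)) := by
        rw [← mul_integral_comp_mul_left, intervalIntegral.integral_const_mul]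
    _ = ∫ y in (-c)..c, P y * g (s * y) := by
        refine integral_congr fun y _ => ?_
        simp only [massDilation, mul_div_cancel_left₀ y hs.ne']
        field_simp

/-- The trajectories `x = s(t) y` have velocity `κ(t) x` with `κ = s' / s`. -/
theorem weakDefect_massDilation_eq_zero {t₀ t₁ : ℝ} {s κ : ℝ → ℝ} {φ φx φt : ℝ → ℝ → ℝ}
    (ht : t₀ ≤ t₁) (hc : 0 ≤ c) (hP : IntervalIntegrable P volume (-c) c)
    (hPc : support P ⊆ Ioo (-c) c) (hs : ∀ t ∈ Icc t₀ t₁, 0 < s t)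
    (hsR : ∀ t ∈ Icc t₀ t₁, c * s t ≤ R) (hsc : ContinuousOn s (Icc t₀ t₁))
    (hκ : ContinuousOn κ (Icc t₀ t₁)) (hs' : ∀ t ∈ Ioo t₀ t₁, HasDerivAt s (κ t * s t) t)
    (hφx : ∀ x ∈ Ioo (-R) R, ∀ t ∈ Ioo t₀ t₁, HasDerivAt (fun x' => φ x' t) (φx x t) x)
    (hφt : ∀ x ∈ Ioo (-R) R, ∀ t ∈ Ioo t₀ t₁, HasDerivAt (φ x) (φt x t) t)
    (hφc : ContinuousOn (uncurry φ) (Icc (-R) R ×ˢ Icc t₀ t₁))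
    (hφxc : ContinuousOn (uncurry φx) (Icc (-R) R ×ˢ Icc t₀ t₁))
    (hφtc : ContinuousOn (uncurry φt) (Icc (-R) R ×ˢ Icc t₀ t₁)) :
    weakDefect (-R) R t₀ t₁ φ (fun x t => φt x t + κ t * x * φx x t)
      (fun x t => massDilation (s t) P x) = 0 := by
  have hmem : ∀ y ∈ Ioo (-c) c, ∀ t ∈ Icc t₀ t₁, s t * y ∈ Ioo (-R) R := fun y hy t htt => by
    have := hs t htt
    have := hsR t htt
    constructor <;> nlinarith [hy.1, hy.2]
  have hmaps : MapsTo (fun p : ℝ × ℝ => (s p.2 * p.1, p.2)) (Icc (-c) c ×ˢ Icc t₀ t₁)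
      (Icc (-R) R ×ˢ Icc t₀ t₁) := fun p ⟨hy, htt⟩ => by
    have := hs p.2 htt
    have := hsR p.2 htt
    exact ⟨⟨by nlinarith [hy.1], by nlinarith [hy.2]⟩, htt⟩
  have hflow : ContinuousOn (fun p : ℝ × ℝ => (s p.2 * p.1, p.2)) (Icc (-c) c ×ˢ Icc t₀ t₁) :=
    ((hsc.comp continuousOn_snd fun p hp => hp.2).mul continuousOn_fst).prodMk continuousOn_snd
  have hψc : ContinuousOn (uncurry fun x t => φt x t + κ t * x * φx x t)
      (Icc (-R) R ×ˢ Icc t₀ t₁) :=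
    hφtc.add (((hκ.comp continuousOn_snd fun p hp => hp.2).mul continuousOn_fst).mul hφxc)
  have hinterior : Ioo (-R) R ×ˢ Ioo t₀ t₁ ⊆ Icc (-R) R ×ˢ Icc t₀ t₁ :=
    prod_mono Ioo_subset_Icc_self Ioo_subset_Icc_self
  have hderiv : ∀ y ∈ Ioo (-c) c, ∀ t ∈ Ioo t₀ t₁, HasDerivAt (fun τ => φ (s τ * y) τ)
      (φt (s t * y) t + κ t * (s t * y) * φx (s t * y) t) t := fun y hy t htt => by
    have hU : Ioo (-R) R ×ˢ Ioo t₀ t₁ ∈ 𝓝 (s t * y, t) :=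
      (isOpen_Ioo.prod isOpen_Ioo).mem_nhds ⟨hmem y hy t (Ioo_subset_Icc_self htt), htt⟩
    simpa only [smul_eq_mul, mul_assoc] using hasDerivAt_comp_of_continuousOn_partials hU
      (fun p hp => hφx p.1 hp.1 p.2 hp.2) (fun p hp => hφt p.1 hp.1 p.2 hp.2)
      (hφxc.mono hinterior) (hφtc.mono hinterior) ((hs' t htt).mul_const y)
  have hpull : ∀ t ∈ Icc t₀ t₁, ∀ g : ℝ → ℝ,
      ∫ x in (-R)..R, massDilation (s t) P x * g x = ∫ y in (-c)..c, P y * g (s t * y) :=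
    fun t htt g => integral_massDilation_mul (hs t htt) (hsR t htt) hPc g
  have hpullψ := integral_congr (μ := volume) fun t htt =>
    hpull t (uIcc_of_le ht ▸ htt) fun x => φt x t + κ t * x * φx x t
  rw [weakDefect, hpullψ, hpull t₁ (right_mem_Icc.2 ht) fun x => φ x t₁,
    hpull t₀ (left_mem_Icc.2 ht) fun x => φ x t₀, sub_eq_zero]
  exact integral_mul_sub_integral_mul_eq_integral_integral_mul_deriv (by linarith) ht hP
    (Φ := fun y t => φ (s t * y) t) (hφc.comp hflow hmaps) (hψc.comp hflow hmaps) hderiv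

end MassDilation

/-- `H` is a measurable approximation of the Heaviside function with transition layer
`[-ε, ε]`. -/
structure IsHeavisideApprox (ε : ℝ) (H : ℝ → ℝ) : Prop where
  measurable : Measurable H
  mem_Icc : ∀ s, H s ∈ Icc (0 : ℝ) 1
  eq_zero : ∀ s ≤ -ε, H s = 0
  eq_one : ∀ s, ε ≤ s → H s = 1

/-- The sharp Heaviside function, with value `0` at the jump. -/
noncomputable def heaviside : ℝ → ℝ :=
  (Ioi 0).indicator 1

theorem isHeavisideApprox_heaviside {ε : ℝ} (hε : 0 < ε) : IsHeavisideApprox ε heaviside where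
  measurable := measurable_one.indicator measurableSet_Ioi
  mem_Icc s := ⟨indicator_nonneg (fun _ _ => zero_le_one) s,
    indicator_le_self' (fun _ _ => zero_le_one) s⟩
  eq_zero s hs := indicator_of_notMem (by simp only [mem_Ioi]; linarith) _
  eq_one s hs := indicator_of_mem (hε.trans_le hs) _

theorem isHeavisideApprox_heavisideReg {ε : ℝ} (hε : 0 < ε) :
    IsHeavisideApprox ε (heavisideReg ε) where
  measurable := by unfold heavisideReg; fun_prop
  mem_Icc s := ⟨le_max_left _ _, max_le zero_le_one (min_le_left _ _)⟩
  eq_zero s hs := max_eq_left <| (min_le_right _ _).trans <|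
    div_nonpos_of_nonpos_of_nonneg (by linarith) (by positivity)
  eq_one s hs := by
    have : 1 ≤ (s + ε) / (2 * ε) := (one_le_div (by positivity)).2 (by linarith)
    rw [heavisideReg, min_eq_left this, max_eq_right zero_le_one]

theorem heaviside_div {s : ℝ} (hs : 0 < s) (x : ℝ) : heaviside (x / s) = heaviside x := by
  simp only [heaviside, indicator_apply, mem_Ioi, div_pos_iff_of_pos_right hs, Pi.one_apply]

namespace IsHeavisideApprox

variable {ε : ℝ} {H K : ℝ → ℝ}

theorem integrable_comp_mul {α : Type*} [MeasurableSpace α] {μ : Measure α}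
    (hH : IsHeavisideApprox ε H) {z f : α → ℝ} (hz : Measurable z) (hf : Integrable f μ) :
    Integrable (fun a => H (z a) * f a) μ :=
  hf.bdd_mul (c := 1) (hH.measurable.comp hz).aestronglyMeasurable <| .of_forall fun a => by
    rw [Real.norm_of_nonneg (hH.mem_Icc _).1]
    exact (hH.mem_Icc _).2

theorem abs_sub_le_one (hH : IsHeavisideApprox ε H) (hK : IsHeavisideApprox ε K) (s : ℝ) :
    |H s - K s| ≤ 1 := by
  simpa using abs_sub_le_of_le_of_le (hH.mem_Icc s).1 (hH.mem_Icc s).2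
    (hK.mem_Icc s).1 (hK.mem_Icc s).2

theorem eq_of_lt_abs (hH : IsHeavisideApprox ε H) (hK : IsHeavisideApprox ε K) {s : ℝ}
    (hs : ε < |s|) : H s = K s := by
  rcases lt_abs.1 hs with h | h
  · rw [hH.eq_one s h.le, hK.eq_one s h.le]
  · rw [hH.eq_zero s (by linarith), hK.eq_zero s (by linarith)]

theorem abs_weakDefect_sub_le (hH : IsHeavisideApprox ε H) (hK : IsHeavisideApprox ε K)
    {a b t₀ t₁ M N : ℝ} {η : ℝ → ℝ} {φ ψ u : ℝ → ℝ → ℝ} (hab : a ≤ b) (ht : t₀ ≤ t₁) (hε : 0 ≤ ε)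
    (hη : Measurable η)
    (hφ : ContinuousOn (uncurry fun x t => u x t * φ x t) (Icc a b ×ˢ Icc t₀ t₁))
    (hψ : ContinuousOn (uncurry fun x t => u x t * ψ x t) (Icc a b ×ˢ Icc t₀ t₁))
    (hM : ∀ x ∈ Icc a b, ∀ t ∈ Icc t₀ t₁, |u x t * φ x t| ≤ M)
    (hN : ∀ x ∈ Icc a b, ∀ t ∈ Icc t₀ t₁, |u x t * ψ x t| ≤ N) :
    |weakDefect a b t₀ t₁ φ ψ (fun x t => H (x - η t) * u x t)
        - weakDefect a b t₀ t₁ φ ψ (fun x t => K (x - η t) * u x t)|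
      ≤ (4 * M + 2 * N * (t₁ - t₀)) * ε := by
  have hintφ : ∀ J, IsHeavisideApprox ε J → ∀ t ∈ Icc t₀ t₁,
      IntervalIntegrable (fun x => J (x - η t) * u x t * φ x t) volume a b := fun J hJ t htt => by
    have hint : IntervalIntegrable (fun x => u x t * φ x t) volume a b :=
      (hφ.uncurry_right t htt).intervalIntegrable_of_Icc hab
    simpa only [intervalIntegrable_iff, IntegrableOn, mul_assoc] using
      hJ.integrable_comp_mul (z := fun x => x - η t) (by fun_prop) hint.def'
  have hintψ : ∀ J, IsHeavisideApprox ε J →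
      IntegrableOn (uncurry fun x t => J (x - η t) * u x t * ψ x t) (Ioc a b ×ˢ Ioc t₀ t₁) :=
    fun J hJ => by
      have hint : IntegrableOn (uncurry fun x t => u x t * ψ x t) (Ioc a b ×ˢ Ioc t₀ t₁) :=
        (hψ.integrableOn_compact (isCompact_Icc.prod isCompact_Icc)).mono_set
          (prod_mono Ioc_subset_Icc_self Ioc_subset_Icc_self)
      simpa only [IntegrableOn, uncurry_def, mul_assoc] using
        hJ.integrable_comp_mul (by fun_prop : Measurable fun p : ℝ × ℝ => p.1 - η p.2) hint
  have hdom : ∀ x t f B, |u x t * f| ≤ B →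
      |(H (x - η t) * u x t - K (x - η t) * u x t) * f| ≤ B := fun x t f B hB => by
    rw [← sub_mul, mul_assoc, abs_mul]
    exact (mul_le_of_le_one_left (abs_nonneg _) (hH.abs_sub_le_one hK _)).trans hB
  rw [← weakDefect_sub hab ht (hintφ H hH) (hintφ K hK) (hintψ H hH) (hintψ K hK)]
  exact abs_weakDefect_le_of_eq_zero_of_lt_abs_sub (η := η) hab ht hε
    (fun x hx t htt => hdom x t _ M (hM x hx t htt))
    (fun x hx t htt => hdom x t _ N (hN x hx t htt))
    (fun x t h => by rw [hH.eq_of_lt_abs hK h, sub_self])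

end IsHeavisideApprox

/-- The Barenblatt solution in the similarity variable `y = x / (t + t*)^{1/3}`. -/
noncomputable def barenblattProfile (y : ℝ) : ℝ :=
  2 * max 0 (1 - y ^ 2 / 12)

/-- The length scale `(t + t*)^{1/3}` of the Barenblatt solution. -/
noncomputable def barenblattScale (ts t : ℝ) : ℝ :=
  (t + ts) ^ ((1 : ℝ) / 3)

theorem continuous_barenblattProfile : Continuous barenblattProfile := by
  unfold barenblattProfile
  fun_prop

theorem support_barenblattProfile_subset :
    support barenblattProfile ⊆ Ioo (-√12) (√12) := by
  intro y hy
  refine abs_lt.1 (Real.lt_sqrt_of_sq_lt ?_)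
  rw [sq_abs]
  by_contra! h
  exact hy (by rw [barenblattProfile, max_eq_left (by linarith), mul_zero])

section Barenblatt

variable {ts t : ℝ}

theorem barenblattScale_pos (h : 0 < t + ts) : 0 < barenblattScale ts t :=
  Real.rpow_pos_of_pos h _

theorem barenblattScale_le {t' : ℝ} (h : 0 < t + ts) (htt' : t ≤ t') :
    barenblattScale ts t ≤ barenblattScale ts t' :=
  Real.rpow_le_rpow h.le (by linarith) (by norm_num)

theorem barenblattScale_sq (h : 0 < t + ts) :
    barenblattScale ts t ^ 2 = (t + ts) ^ ((2 : ℝ) / 3) := by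
  rw [barenblattScale, ← Real.rpow_mul_natCast h.le]
  norm_num

theorem hasDerivAt_barenblattScale (h : 0 < t + ts) :
    HasDerivAt (barenblattScale ts) ((3 * (t + ts))⁻¹ * barenblattScale ts t) t := by
  refine (((hasDerivAt_id t).add_const ts).rpow_const (Or.inl h.ne')).congr_deriv ?_
  rw [id, Real.rpow_sub_one h.ne', barenblattScale]
  field_simp

theorem barenblatt_eq_massDilation (h : 0 < t + ts) (x : ℝ) :
    barenblatt ts x t = massDilation (barenblattScale ts t) barenblattProfile x := by
  have hneg₁ : (t + ts) ^ (-(1 : ℝ) / 3) = (barenblattScale ts t)⁻¹ := by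
    rw [neg_div, Real.rpow_neg h.le, barenblattScale]
  have hneg₂ : (t + ts) ^ (-(2 : ℝ) / 3) = (barenblattScale ts t ^ 2)⁻¹ := by
    rw [neg_div, Real.rpow_neg h.le, barenblattScale_sq h]
  have hsq : x ^ 2 / 12 * (barenblattScale ts t ^ 2)⁻¹ = (x / barenblattScale ts t) ^ 2 / 12 := by
    ring
  rw [barenblatt, massDilation, barenblattProfile, hneg₁, hneg₂, hsq]
  ring

theorem heaviside_mul_barenblatt_eq_massDilation (h : 0 < t + ts) (x y₀ : ℝ) :
    heaviside (x - barenblattScale ts t * y₀) * barenblatt ts x t =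
      massDilation (barenblattScale ts t)
        (fun y => heaviside (y - y₀) * barenblattProfile y) x := by
  have hs := barenblattScale_pos h
  have hy : x / barenblattScale ts t - y₀ =
      (x - barenblattScale ts t * y₀) / barenblattScale ts t := by
    field_simp
  simp only [barenblatt_eq_massDilation h, massDilation, hy, heaviside_div hs]
  ring

theorem barenblatt_mul_Gvel (h : 0 < t + ts) (x : ℝ) :
    barenblatt ts x t * Gvel ts x t = barenblatt ts x t * -((3 * (t + ts))⁻¹ * x) := by
  by_cases hx : x ^ 2 < 12 * (t + ts) ^ ((2 : ℝ) / 3)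
  · rw [Gvel, if_pos hx]
    ring
  · suffices barenblatt ts x t = 0 by rw [this, zero_mul, zero_mul]
    have hs := barenblattScale_pos h
    rw [barenblatt_eq_massDilation h, massDilation, barenblattProfile, max_eq_left, mul_zero,
      mul_zero]
    rw [← barenblattScale_sq h, not_lt] at hx
    rw [sub_nonpos, one_le_div (by norm_num), div_pow, le_div_iff₀ (by positivity)]
    exact hx

end Barenblatt

theorem continuousOn_barenblatt {ts : ℝ} {S : Set (ℝ × ℝ)} (hS : ∀ p ∈ S, 0 < p.2 + ts) :
    ContinuousOn (uncurry (barenblatt ts)) S := by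
  have hpow : ∀ r : ℝ, ContinuousOn (fun p : ℝ × ℝ => (p.2 + ts) ^ r) S := fun r =>
    ContinuousOn.rpow_const (by fun_prop) fun p hp => Or.inl (hS p hp).ne'
  unfold uncurry barenblatt
  have := hpow (-(1 : ℝ) / 3)
  have := hpow (-(2 : ℝ) / 3)
  fun_prop

section WeakIdentity

variable {ts R T : ℝ} {η : ℝ → ℝ} {φ φx φt : ℝ → ℝ → ℝ}

theorem weakDefect_heaviside_mul_barenblatt_eq_zero {y₀ : ℝ} (hts : 0 < ts) (hT : 0 ≤ T)
    (hRT : √12 * barenblattScale ts T ≤ R)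
    (hη : ∀ t ∈ Icc 0 T, η t = barenblattScale ts t * y₀)
    (hφx : ∀ x ∈ Ioo (-R) R, ∀ t ∈ Ioo 0 T, HasDerivAt (fun x' => φ x' t) (φx x t) x)
    (hφt : ∀ x ∈ Ioo (-R) R, ∀ t ∈ Ioo 0 T, HasDerivAt (φ x) (φt x t) t)
    (hφc : ContinuousOn (uncurry φ) (Icc (-R) R ×ˢ Icc 0 T))
    (hφxc : ContinuousOn (uncurry φx) (Icc (-R) R ×ˢ Icc 0 T))
    (hφtc : ContinuousOn (uncurry φt) (Icc (-R) R ×ˢ Icc 0 T)) :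
    weakDefect (-R) R 0 T φ (fun x t => φt x t - Gvel ts x t * φx x t)
      (fun x t => heaviside (x - η t) * barenblatt ts x t) = 0 := by
  have hpos : ∀ t ∈ Icc 0 T, 0 < t + ts := fun t ht => add_pos_of_nonneg_of_pos ht.1 hts
  have hscale : ∀ t ∈ Icc 0 T, HasDerivAt (barenblattScale ts)
      ((3 * (t + ts))⁻¹ * barenblattScale ts t) t := fun t ht =>
    hasDerivAt_barenblattScale (hpos t ht)
  have hscaleR : ∀ t ∈ Icc 0 T, √12 * barenblattScale ts t ≤ R := fun t ht =>
    (mul_le_mul_of_nonneg_left (barenblattScale_le (hpos t ht) ht.2) (Real.sqrt_nonneg _)).trans hRT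
  have hR : 0 ≤ R :=
    (mul_nonneg (Real.sqrt_nonneg _)
      (barenblattScale_pos (hpos T (right_mem_Icc.2 hT))).le).trans hRT
  have hP : IntervalIntegrable (fun y => heaviside (y - y₀) * barenblattProfile y) volume
      (-√12) √12 := by
    rw [intervalIntegrable_iff]
    exact (isHeavisideApprox_heaviside one_pos).integrable_comp_mul (by fun_prop)
      (continuous_barenblattProfile.intervalIntegrable _ _).def'
  have hPc : support (fun y => heaviside (y - y₀) * barenblattProfile y) ⊆ Ioo (-√12) √12 :=
    (support_mul_subset_right _ _).trans support_barenblattProfile_subset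
  have hκ : ContinuousOn (fun t => (3 * (t + ts))⁻¹) (Icc 0 T) :=
    ContinuousOn.inv₀ (by fun_prop) fun t ht => mul_ne_zero three_ne_zero (hpos t ht).ne'
  refine (weakDefect_congr (by linarith) hT (fun x _ t ht => ?_) fun x _ t ht => ?_).trans
    (weakDefect_massDilation_eq_zero hT (Real.sqrt_nonneg 12) hP hPc
      (fun t ht => barenblattScale_pos (hpos t ht)) hscaleR
      (fun t ht => (hscale t ht).continuousAt.continuousWithinAt) hκ
      (fun t ht => hscale t (Ioo_subset_Icc_self ht)) hφx hφt hφc hφxc hφtc)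
  · rw [hη t ht, heaviside_mul_barenblatt_eq_massDilation (hpos t ht)]
  · rw [← heaviside_mul_barenblatt_eq_massDilation (hpos t ht), hη t ht]
    linear_combination (-heaviside (x - barenblattScale ts t * y₀) * φx x t) *
      barenblatt_mul_Gvel (hpos t ht) x

theorem continuousOn_barenblatt_mul_sub_Gvel {S : Set (ℝ × ℝ)} (hS : ∀ p ∈ S, 0 < p.2 + ts)
    (hφxc : ContinuousOn (uncurry φx) S) (hφtc : ContinuousOn (uncurry φt) S) :
    ContinuousOn (uncurry fun x t => barenblatt ts x t * (φt x t - Gvel ts x t * φx x t)) S := by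
  have hκ : ContinuousOn (fun p : ℝ × ℝ => (3 * (p.2 + ts))⁻¹) S :=
    ContinuousOn.inv₀ (by fun_prop) fun p hp => mul_ne_zero three_ne_zero (hS p hp).ne'
  refine ((continuousOn_barenblatt hS).mul
    (hφtc.add ((hκ.mul continuousOn_fst).mul hφxc))).congr fun p hp => ?_
  simp only [uncurry, Pi.mul_apply, Pi.add_apply]
  linear_combination -φx p.1 p.2 * barenblatt_mul_Gvel (hS p hp) p.1

theorem approx_weak_identity_general {x₀ : ℝ} (hts : 0 < ts) (hT : 0 ≤ T)
    (hRT : √12 * (T + ts) ^ ((1 : ℝ) / 3) ≤ R)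
    (hη : ∀ t, η t = x₀ * ((t + ts) / ts) ^ ((1 : ℝ) / 3))
    (hφx : ∀ x ∈ Ioo (-R) R, ∀ t ∈ Ioo 0 T, HasDerivAt (fun x' => φ x' t) (φx x t) x)
    (hφt : ∀ x ∈ Ioo (-R) R, ∀ t ∈ Ioo 0 T, HasDerivAt (φ x) (φt x t) t)
    (hφc : ContinuousOn (uncurry φ) (Icc (-R) R ×ˢ Icc 0 T))
    (hφxc : ContinuousOn (uncurry φx) (Icc (-R) R ×ˢ Icc 0 T))
    (hφtc : ContinuousOn (uncurry φt) (Icc (-R) R ×ˢ Icc 0 T)) :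
    ∃ C > 0, ∀ ε > 0, ∀ H, IsHeavisideApprox ε H →
      |weakDefect (-R) R 0 T φ (fun x t => φt x t - Gvel ts x t * φx x t)
        (fun x t => H (x - η t) * barenblatt ts x t)| ≤ C * ε := by
  have hpos : ∀ p ∈ Icc (-R) R ×ˢ Icc 0 T, 0 < p.2 + ts := fun p hp =>
    add_pos_of_nonneg_of_pos hp.2.1 hts
  have hR : -R ≤ R := neg_le_self <| (mul_nonneg (Real.sqrt_nonneg _) (by positivity)).trans hRT
  have hηmeas : Measurable η := by
    rw [funext hη]
    fun_prop
  have hηscale : ∀ t ∈ Icc 0 T, η t = barenblattScale ts t * (x₀ / barenblattScale ts 0) :=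
    fun t ht => by
      rw [hη, Real.div_rpow (add_nonneg ht.1 hts.le) hts.le, barenblattScale, barenblattScale,
        zero_add]
      ring
  have hexact := weakDefect_heaviside_mul_barenblatt_eq_zero hts hT hRT hηscale hφx hφt hφc hφxc
    hφtc
  have hBφ : ContinuousOn (uncurry fun x t => barenblatt ts x t * φ x t)
      (Icc (-R) R ×ˢ Icc 0 T) := (continuousOn_barenblatt hpos).mul hφc
  have hBψ := continuousOn_barenblatt_mul_sub_Gvel hpos hφxc hφtc
  have hcompact : IsCompact (Icc (-R) R ×ˢ Icc 0 T) := isCompact_Icc.prod isCompact_Icc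
  obtain ⟨M, hM₀, hM⟩ := (hcompact.image_of_continuousOn hBφ).isBounded.exists_pos_norm_le
  obtain ⟨N, hN₀, hN⟩ := (hcompact.image_of_continuousOn hBψ).isBounded.exists_pos_norm_le
  refine ⟨4 * M + 2 * N * (T - 0), by rw [sub_zero]; positivity, fun ε hε H hH => ?_⟩
  simpa only [hexact, sub_zero] using hH.abs_weakDefect_sub_le (isHeavisideApprox_heaviside hε)
    hR hT hε.le hηmeas hBφ hBψ (fun x hx t ht => forall_mem_image.1 hM (mk_mem_prod hx ht))
    fun x hx t ht => forall_mem_image.1 hN (mk_mem_prod hx ht)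

end WeakIdentity

/-- The regularized segregated component `u₁^ε(x,t) = H_ε(x - η(t)) B(x,t)` satisfies the
weak formulation of `∂_t u₁ = ∂_x (u₁ ∂_x B)` up to an error of order `ε`, uniformly for
small `ε`, for every `C¹` test function `φ` on `[-R,R] × [0,T]`. -/
theorem approx_weak_identity
    (ts R T x₀ : ℝ) (hts : 0 < ts) (hR : 0 < R) (hT : 0 < T)
    (hRT : Real.sqrt 12 * (T + ts) ^ ((1:ℝ)/3) < R)
    (hx₀ : x₀ ^ 2 < 12 * ts ^ ((2:ℝ)/3))
    (η : ℝ → ℝ) (hη : ∀ t, η t = x₀ * ((t + ts) / ts) ^ ((1:ℝ)/3))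
    (φ φx φt : ℝ → ℝ → ℝ)
    (hφx : ∀ x ∈ Icc (-R) R, ∀ t ∈ Icc (0:ℝ) T,
      HasDerivAt (fun x' => φ x' t) (φx x t) x)
    (hφt : ∀ x ∈ Icc (-R) R, ∀ t ∈ Icc (0:ℝ) T,
      HasDerivAt (fun t' => φ x t') (φt x t) t)
    (hφc : ContinuousOn (fun p : ℝ × ℝ => φ p.1 p.2) (Icc (-R) R ×ˢ Icc (0:ℝ) T))
    (hφxc : ContinuousOn (fun p : ℝ × ℝ => φx p.1 p.2) (Icc (-R) R ×ˢ Icc (0:ℝ) T))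
    (hφtc : ContinuousOn (fun p : ℝ × ℝ => φt p.1 p.2) (Icc (-R) R ×ˢ Icc (0:ℝ) T)) :
    ∃ C > (0:ℝ), ∃ ε₀ > (0:ℝ), ∀ ε : ℝ, 0 < ε → ε ≤ ε₀ →
      |(∫ x in (-R)..R, heavisideReg ε (x - η T) * barenblatt ts x T * φ x T)
        - (∫ x in (-R)..R, heavisideReg ε (x - η 0) * barenblatt ts x 0 * φ x 0)
        - ∫ t in (0:ℝ)..T, ∫ x in (-R)..R,
            heavisideReg ε (x - η t) * barenblatt ts x t
              * (φt x t - Gvel ts x t * φx x t)|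
        ≤ C * ε := by
  obtain ⟨C, hC, hbound⟩ := approx_weak_identity_general hts hT.le hRT.le hη
    (fun x hx t ht => hφx x (Ioo_subset_Icc_self hx) t (Ioo_subset_Icc_self ht))
    (fun x hx t ht => hφt x (Ioo_subset_Icc_self hx) t (Ioo_subset_Icc_self ht)) hφc hφxc hφtc
  exact ⟨C, hC, 1, one_pos, fun ε hε _ => hbound ε hε _ (isHeavisideApprox_heavisideReg hε)⟩
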